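/- For every real B > 0 there exists a constant C > 0 and an index K such that for all k ≥ K, the k-th prime p_k and the k-th primorial N_k = p_1 p_2 ⋯ p_k satisfy |log(log p_k) − log(log(log N_k))| ≤ C / (log(log N_k))^{B+1}. -/

import Mathlib

/-!
Since `log N_k = θ(p_k)`, the claim compares `log log p` with `log log θ(p)` at a prime `p`. The
prime number theorem in the form `θ(x) = x + O(x / log ^ m x)`, for every `m`, gives
`log θ(p) = log p + O(1 / log ^ m p)`, and a second logarithm divides the error by `log p`. So
everything rests on a prime number theorem saving any power of the logarithm
(`eventually_abs_theta_sub_le`), which is proved here without a zero-free region.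

* Zeta is `O(|t| ^ ε)` slightly to the left of `re s = 1` (`norm_emZeta_le`), so by Cauchy estimates
  all its derivatives are `O(|t| ^ ε)` on `1 < re s ≤ 2`. The `3-4-1` inequality then gives the same
  for `1 / ζ` (`SubpolyGrowth.inv_riemannZeta`), hence for all derivatives of `-deriv ζ / ζ - ζ`; near
  `s = 1` the poles cancel (`norm_iteratedDeriv_zetaDefect_le`).
* The `k`-th derivative of `-deriv ζ / ζ - ζ` is, up to sign, the Dirichlet series of
  `(Λ n - 1) * log ^ k n`. Mellin inversion with the weight `max (1 - n / N) 0`, on the line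
  `re s = 1 + 1 / log N`, gives `∑ n ≤ N, (Λ n - 1) * log ^ k n * (N - n) = O(N ^ 2)`, for every `k`
  (`abs_sum_logWeighted_tent_le`).
* As `Λ ≥ 0`, comparing smoothed sums at distance `N / log ^ m N` removes the smoothing. For
  `k = 2 * m` the loss is a factor `log ^ m N`, and partial summation regains `log ^ (2 * m) N`.
-/

/-- `primorialOfFirstPrimes k = p₁ p₂ ⋯ p_k`, the product of the first `k` primes. -/
noncomputable def primorialOfFirstPrimes (k : ℕ) : ℕ := ∏ i ∈ Finset.range k, Nat.nth Nat.Prime i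

section

open Complex Filter Topology

/-! ### Zeta to the left of the line of absolute convergence -/

/-- The Euler-Maclaurin term `(n + 1) ^ (-s) - ∫ x in (n + 1)..(n + 2), x ^ (-s)`, with the integral
evaluated; it is meaningful for `s ≠ 1`. -/
noncomputable def emTerm (n : ℕ) (s : ℂ) : ℂ :=
  ((n + 1 : ℝ) : ℂ) ^ (-s) -
    (((n + 2 : ℝ) : ℂ) ^ (1 - s) - ((n + 1 : ℝ) : ℂ) ^ (1 - s)) / (1 - s)

/-- The mean value inequality, applied to the primitive and then to the integrand. -/
lemma norm_emTerm_le (n : ℕ) {s : ℂ} (hs : 0 < s.re) (hs1 : s ≠ 1) :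
    ‖emTerm n s‖ ≤ ‖s‖ * (n + 1 : ℝ) ^ (-s.re - 1) := by
  have hn : (0 : ℝ) < n + 1 := by positivity
  have h1s : (1 - s) ≠ 0 := sub_ne_zero.mpr hs1.symm
  have hs0 : s ≠ 0 := by rintro rfl; simp at hs
  have hd (c : ℂ) (hc : c ≠ 0) (x : ℝ) (hx : 0 < x) :
      HasDerivAt (fun x : ℝ => (x : ℂ) ^ c) (c * (x : ℂ) ^ (c - 1)) x :=
     hasDerivAt_ofReal_cpow_const hx.ne' hc
  have hb (x : ℝ) (hx : x ∈ Set.Icc (n + 1 : ℝ) (n + 2)) :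
      ‖(x : ℂ) ^ (-s) - ((n + 1 : ℝ) : ℂ) ^ (-s)‖ ≤ ‖s‖ * (n + 1 : ℝ) ^ (-s.re - 1) := by
    have key := norm_image_sub_le_of_norm_deriv_le_segment' (a := (n + 1 : ℝ)) (b := n + 2)
      (f := fun x : ℝ => (x : ℂ) ^ (-s)) (f' := fun x : ℝ => (-s) * (x : ℂ) ^ (-s - 1))
      (C := ‖s‖ * (n + 1 : ℝ) ^ (-s.re - 1))
      (fun y hy => (hd (-s) (neg_ne_zero.mpr hs0) y (by linarith [hy.1])).hasDerivWithinAt)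
      (fun y hy => by
        have hy0 : 0 < y := by linarith [hy.1]
        rw [norm_mul, norm_neg, norm_cpow_eq_rpow_re_of_pos hy0]
        gcongr
        simp only [sub_re, neg_re, one_re]
        exact Real.rpow_le_rpow_of_nonpos hn hy.1 (by linarith)) x hx
    refine key.trans (mul_le_of_le_one_right (by positivity) (by linarith [hx.2]))
  have key := norm_image_sub_le_of_norm_deriv_le_segment' (a := (n + 1 : ℝ)) (b := n + 2)
      (f := fun x : ℝ => (x : ℂ) ^ (1 - s) / (1 - s) - x * ((n + 1 : ℝ) : ℂ) ^ (-s))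
      (f' := fun x : ℝ => (x : ℂ) ^ (-s) - ((n + 1 : ℝ) : ℂ) ^ (-s))
      (C := ‖s‖ * (n + 1 : ℝ) ^ (-s.re - 1))
      (fun y hy => by
        have h1 := (hd (1 - s) h1s y (by linarith [hy.1])).div_const (1 - s)
        have h2 := (hasDerivAt_id y).ofReal_comp.mul_const (((n + 1 : ℝ) : ℂ) ^ (-s))
        refine (((h1.sub h2).congr_deriv ?_)).hasDerivWithinAt
        rw [mul_div_cancel_left₀ _ h1s]; ring_nf; simp)
      (fun y hy => hb y ⟨hy.1, hy.2.le⟩) (n + 2) ⟨by linarith, le_rfl⟩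
  have e : (n + 2 : ℝ) - (n + 1) = 1 := by ring
  rw [e, mul_one, ← norm_neg] at key
  refine le_of_eq_of_le (congrArg norm ?_) key
  rw [emTerm]; push_cast; ring

lemma differentiableOn_emTerm (n : ℕ) : DifferentiableOn ℂ (emTerm n) {s | s ≠ 1} := by
  intro s hs
  have h1s : (1 - s) ≠ 0 := sub_ne_zero.mpr (Ne.symm hs)
  have h1 : ((n + 1 : ℝ) : ℂ) ≠ 0 := by norm_cast
  have h2 : ((n + 2 : ℝ) : ℂ) ≠ 0 := by norm_cast
  unfold emTerm
  apply DifferentiableAt.differentiableWithinAt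
  have a1 : DifferentiableAt ℂ (fun s : ℂ => ((n + 1 : ℝ) : ℂ) ^ (-s)) s :=
    (differentiableAt_id.neg).const_cpow (Or.inl h1)
  have a2 : DifferentiableAt ℂ (fun s : ℂ => ((n + 1 : ℝ) : ℂ) ^ (1 - s)) s :=
    (differentiableAt_id.const_sub 1).const_cpow (Or.inl h1)
  have a3 : DifferentiableAt ℂ (fun s : ℂ => ((n + 2 : ℝ) : ℂ) ^ (1 - s)) s :=
    (differentiableAt_id.const_sub 1).const_cpow (Or.inl h2)
  exact a1.sub ((a3.sub a2).div (differentiableAt_id.const_sub 1) h1s)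

lemma sum_range_emTerm (N : ℕ) (s : ℂ) :
    ∑ n ∈ Finset.range N, emTerm n s = ∑ n ∈ Finset.range N, ((n + 1 : ℝ) : ℂ) ^ (-s) -
      (((N + 1 : ℝ) : ℂ) ^ (1 - s) - 1) / (1 - s) := by
  induction N with
  | zero => simp
  | succ N ih =>
    rw [Finset.sum_range_succ, ih, Finset.sum_range_succ, emTerm]
    push_cast
    ring_nf

lemma summable_succ_rpow {δ : ℝ} (hδ : 0 < δ) :
    Summable (fun n : ℕ => (n + 1 : ℝ) ^ (-1 - δ)) := by
  have := (Real.summable_nat_rpow (p := -1 - δ)).mpr (by linarith)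
  simpa using (summable_nat_add_iff 1).mpr this

lemma summable_emTerm {s : ℂ} (hs : 0 < s.re) (hs1 : s ≠ 1) : Summable fun n => emTerm n s := by
  refine Summable.of_norm_bounded ((summable_succ_rpow hs).mul_left ‖s‖) fun n => ?_
  convert norm_emTerm_le n hs hs1 using 3; ring

/-- The continuation of the zeta function to `re s > 0`, `s ≠ 1`, by comparison of the Dirichlet
series with an integral. -/
noncomputable def emZeta (s : ℂ) : ℂ := 1 / (s - 1) + ∑' n, emTerm n s

lemma riemannZeta_eq_emZeta {s : ℂ} (hs : 1 < s.re) : riemannZeta s = emZeta s := by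
  have hs1 : s ≠ 1 := by rintro rfl; simp at hs
  have h1 := (summable_emTerm (by linarith) hs1).hasSum.tendsto_sum_nat
  have h2 : Tendsto (fun N : ℕ => ∑ n ∈ Finset.range N, ((n + 1 : ℝ) : ℂ) ^ (-s)) atTop
      (𝓝 (riemannZeta s)) := by
    rw [zeta_eq_tsum_one_div_nat_add_one_cpow hs]
    have hsum : Summable fun n : ℕ => 1 / ((n : ℂ) + 1) ^ s := by
      have := (summable_nat_add_iff 1).mpr (Complex.summable_one_div_nat_cpow.mpr hs)
      simpa using this
    convert hsum.hasSum.tendsto_sum_nat using 4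
    rw [cpow_neg, one_div]; push_cast; rfl
  have h3 : Tendsto (fun N : ℕ => ((N + 1 : ℝ) : ℂ) ^ (1 - s)) atTop (𝓝 0) := by
    rw [tendsto_zero_iff_norm_tendsto_zero]
    have : Tendsto (fun N : ℕ => ((N : ℝ) + 1) ^ (-(s.re - 1))) atTop (𝓝 0) :=
      (tendsto_rpow_neg_atTop (by linarith)).comp
        (tendsto_atTop_add_const_right _ 1 tendsto_natCast_atTop_atTop)
    convert this using 2 with N
    rw [norm_cpow_eq_rpow_re_of_pos (by positivity)]
    simp
  have h4 := h2.sub ((h3.sub_const 1).div_const (1 - s))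
  simp_rw [sum_range_emTerm] at h1
  have := tendsto_nhds_unique h4 h1
  rw [emZeta, ← this]
  have h1s : (1 - s) ≠ 0 := sub_ne_zero.mpr (Ne.symm hs1)
  have h1s' : (s - 1) ≠ 0 := sub_ne_zero.mpr hs1
  field_simp
  ring

/-- Slightly to the left of the line `re s = 1`, zeta grows at most like a small power of the height.
The Dirichlet series is cut at `N ≈ |im s|` and the tail is estimated by `norm_emTerm_le`. -/
lemma norm_emZeta_le {δ : ℝ} (hδ : 0 < δ) (hδ1 : δ ≤ 1 / 2) : ∃ C : ℝ, 0 ≤ C ∧ ∀ s : ℂ, 1 - δ ≤ s.re →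
    s.re ≤ 3 → 1 / 2 ≤ |s.im| → ‖emZeta s‖ ≤ C * |s.im| ^ (2 * δ) := by
  set K : ℝ := ∑' n : ℕ, (n + 1 : ℝ) ^ (-1 - δ) with hK
  have hsK := summable_succ_rpow hδ
  have hK0 : 0 ≤ K := tsum_nonneg fun n => by positivity
  refine ⟨6 ^ (2 * δ) * (K + 4 + 8 * K), by positivity, fun s h1 h2 h3 => ?_⟩
  set t := |s.im| with ht
  have hs1 : s ≠ 1 := by rintro rfl; norm_num [t] at h3
  have hs0 : 0 < s.re := by linarith
  have htn : t ≤ ‖s - 1‖ := by simpa using abs_im_le_norm (s - 1)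
  have htn' : t ≤ ‖1 - s‖ := by rwa [norm_sub_rev]
  have hsn : ‖s‖ ≤ 7 * t := by
    refine (norm_le_abs_re_add_abs_im s).trans ?_
    rw [abs_of_pos hs0]; linarith
  set N := ⌈t⌉₊ with hN
  have hN1 : t ≤ N := Nat.le_ceil t
  have hN2 : (N : ℝ) < t + 1 := Nat.ceil_lt_add_one (by linarith)
  have hN3 : 0 < N := by
    have : (0 : ℝ) < N := by linarith
    exact_mod_cast this
  set M : ℝ := (N + 1 : ℝ) ^ (2 * δ) with hM
  have hM1 : 1 ≤ M := Real.one_le_rpow (by linarith [Nat.cast_nonneg (α := ℝ) N]) (by linarith)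
  have hMt : M ≤ 6 ^ (2 * δ) * t ^ (2 * δ) := by
    rw [← Real.mul_rpow (by norm_num) (by linarith)]
    exact Real.rpow_le_rpow (by positivity) (by linarith) (by linarith)
  have hsum := summable_emTerm hs0 hs1
  have hdec : emZeta s = ∑ n ∈ Finset.range N, ((n + 1 : ℝ) : ℂ) ^ (-s) +
      ((N + 1 : ℝ) : ℂ) ^ (1 - s) / (s - 1) + ∑' n, emTerm (n + N) s := by
    rw [emZeta, ← hsum.sum_add_tsum_nat_add N, sum_range_emTerm]
    have h1s : (1 - s) ≠ 0 := sub_ne_zero.mpr (Ne.symm hs1)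
    have h1s' : (s - 1) ≠ 0 := sub_ne_zero.mpr hs1
    field_simp
    ring
  have b1 : ‖∑ n ∈ Finset.range N, ((n + 1 : ℝ) : ℂ) ^ (-s)‖ ≤ K * M := by
    refine (norm_sum_le _ _).trans ?_
    calc _ ≤ ∑ n ∈ Finset.range N, (n + 1 : ℝ) ^ (-1 - δ) * M := by
          refine Finset.sum_le_sum fun n hn => ?_
          have hn' : (n : ℝ) + 1 ≤ N + 1 := by
            have := Finset.mem_range.mp hn
            have : (n : ℝ) ≤ N := by exact_mod_cast this.le
            linarith
          rw [norm_cpow_eq_rpow_re_of_pos (by positivity)]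
          calc (n + 1 : ℝ) ^ (-s).re ≤ (n + 1 : ℝ) ^ ((-1 - δ) + 2 * δ) :=
                Real.rpow_le_rpow_of_exponent_le (by linarith [Nat.cast_nonneg (α := ℝ) n])
                  (by simp; linarith)
            _ = (n + 1 : ℝ) ^ (-1 - δ) * (n + 1 : ℝ) ^ (2 * δ) := Real.rpow_add (by positivity) _ _
            _ ≤ _ := by
                gcongr
                exact Real.rpow_le_rpow (by positivity) hn' (by linarith)
      _ = (∑ n ∈ Finset.range N, (n + 1 : ℝ) ^ (-1 - δ)) * M := by rw [Finset.sum_mul]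
      _ ≤ K * M := by
          gcongr
          exact hsK.sum_le_tsum _ fun n _ => by positivity
  have b2 : ‖((N + 1 : ℝ) : ℂ) ^ (1 - s) / (s - 1)‖ ≤ 4 * M := by
    rw [norm_div, div_le_iff₀ (by linarith), norm_cpow_eq_rpow_re_of_pos (by positivity)]
    calc (N + 1 : ℝ) ^ (1 - s).re ≤ M :=
          Real.rpow_le_rpow_of_exponent_le (by linarith [Nat.cast_nonneg (α := ℝ) N])
                  (by simp; linarith)
      _ ≤ 4 * M * ‖s - 1‖ := by nlinarith
  have b3 : ‖∑' n, emTerm (n + N) s‖ ≤ 8 * K * M := by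
    have hb : ∀ n, ‖emTerm (n + N) s‖ ≤ (n + 1 : ℝ) ^ (-1 - δ) * (8 * M) := by
      intro n
      refine (norm_emTerm_le _ hs0 hs1).trans ?_
      push_cast
      have hX : (0 : ℝ) < n + N + 1 := by positivity
      calc ‖s‖ * ((n : ℝ) + N + 1) ^ (-s.re - 1)
          ≤ ‖s‖ * ((n : ℝ) + N + 1) ^ ((-1 - δ) + (-1 + 2 * δ)) := by
            gcongr
            · linarith [Nat.cast_nonneg (α := ℝ) n, Nat.cast_nonneg (α := ℝ) N]
            · linarith
        _ = ‖s‖ * (((n : ℝ) + N + 1) ^ (-1 - δ) * ((n : ℝ) + N + 1) ^ (-1 + 2 * δ)) := by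
            rw [Real.rpow_add hX]
        _ ≤ ‖s‖ * (((n : ℝ) + 1) ^ (-1 - δ) * ((N : ℝ) + 1) ^ (-1 + 2 * δ)) := by
            gcongr ?_ * (?_ * ?_)
            · exact Real.rpow_le_rpow_of_nonpos (by positivity) (by linarith) (by linarith)
            · exact Real.rpow_le_rpow_of_nonpos (by positivity) (by linarith) (by linarith)
        _ = (‖s‖ / (N + 1)) * ((n : ℝ) + 1) ^ (-1 - δ) * M := by
            rw [Real.rpow_add (by positivity), Real.rpow_neg_one]; ring
        _ ≤ 8 * ((n : ℝ) + 1) ^ (-1 - δ) * M := by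
            gcongr
            rw [div_le_iff₀ (by positivity)]; linarith
        _ = _ := by ring
    have := tsum_of_norm_bounded (hsK.mul_right (8 * M)).hasSum hb
    rw [tsum_mul_right] at this
    linarith
  rw [hdec]
  calc _ ≤ K * M + 4 * M + 8 * K * M := (norm_add₃_le).trans (by gcongr)
    _ = (K + 4 + 8 * K) * M := by ring
    _ ≤ (K + 4 + 8 * K) * (6 ^ (2 * δ) * t ^ (2 * δ)) := by gcongr
    _ = _ := by ring

lemma differentiableAt_emZeta {s : ℂ} (hs : 0 < s.re) (hs1 : s ≠ 1) :
    DifferentiableAt ℂ emZeta s := by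
  have h1s : (s - 1) ≠ 0 := sub_ne_zero.mpr hs1
  refine DifferentiableAt.add ?_ ?_
  · exact (differentiableAt_const _).div (differentiableAt_id.sub_const 1) h1s
  set U : Set ℂ := {z | s.re / 2 < z.re ∧ ‖z‖ < ‖s‖ + 1 ∧ z ≠ 1} with hU
  have hUo : IsOpen U := by
    refine (isOpen_lt continuous_const continuous_re).inter
      ((isOpen_lt continuous_norm continuous_const).inter isOpen_ne)
  have hsU : s ∈ U := ⟨by linarith, by linarith, hs1⟩
  refine (differentiableOn_tsum_of_summable_norm
    ((summable_succ_rpow (half_pos hs)).mul_left (‖s‖ + 1))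
    (fun n => (differentiableOn_emTerm n).mono fun z hz => hz.2.2) hUo ?_).differentiableAt
    (hUo.mem_nhds hsU)
  rintro n z ⟨h1, h2, h3⟩
  refine (norm_emTerm_le n (by linarith) h3).trans ?_
  gcongr ?_ * ?_
  exact Real.rpow_le_rpow_of_exponent_le (by linarith [Nat.cast_nonneg (α := ℝ) n]) (by linarith)

/-! ### Functions of subpolynomial growth -/

/-- Subpolynomial growth: for every `ε > 0` the function is `O(|im s| ^ ε)`, uniformly in the region
`1 < re s ≤ 2`, `1 ≤ |im s|`. -/
def SubpolyGrowth (f : ℂ → ℂ) : Prop :=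
  ∀ ε : ℝ, 0 < ε → ∃ C : ℝ, 0 ≤ C ∧ ∀ s : ℂ, 1 < s.re → s.re ≤ 2 → 1 ≤ |s.im| →
    ‖f s‖ ≤ C * |s.im| ^ ε

lemma iteratedDeriv_eq_of_eqOn {f g : ℂ → ℂ} (h : ∀ s : ℂ, 1 < s.re → f s = g s) (j : ℕ)
    {s : ℂ} (hs : 1 < s.re) : iteratedDeriv j f s = iteratedDeriv j g s :=
  Filter.EventuallyEq.iteratedDeriv_eq j
    (Filter.eventuallyEq_of_mem ((isOpen_lt continuous_const continuous_re).mem_nhds hs) h)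

namespace SubpolyGrowth

lemma congr {f g : ℂ → ℂ} (hf : SubpolyGrowth f) (h : ∀ s : ℂ, 1 < s.re → f s = g s) :
    SubpolyGrowth g := by
  intro ε hε
  obtain ⟨C, hC, h'⟩ := hf ε hε
  exact ⟨C, hC, fun s h1 h2 h3 => h s h1 ▸ h' s h1 h2 h3⟩

lemma const (c : ℂ) : SubpolyGrowth fun _ => c := by
  intro ε hε
  exact ⟨‖c‖, norm_nonneg _, fun s h1 h2 h3 =>
    le_mul_of_one_le_right (norm_nonneg _) (Real.one_le_rpow h3 hε.le)⟩

lemma add {f g : ℂ → ℂ} (hf : SubpolyGrowth f) (hg : SubpolyGrowth g) :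
    SubpolyGrowth fun s => f s + g s := by
  intro ε hε
  obtain ⟨C, hC, h⟩ := hf ε hε
  obtain ⟨D, hD, h'⟩ := hg ε hε
  refine ⟨C + D, by positivity, fun s h1 h2 h3 => (norm_add_le _ _).trans ?_⟩
  rw [add_mul]
  exact add_le_add (h s h1 h2 h3) (h' s h1 h2 h3)

lemma mul {f g : ℂ → ℂ} (hf : SubpolyGrowth f) (hg : SubpolyGrowth g) :
    SubpolyGrowth fun s => f s * g s := by
  intro ε hε
  obtain ⟨C, hC, h⟩ := hf (ε / 2) (half_pos hε)
  obtain ⟨D, hD, h'⟩ := hg (ε / 2) (half_pos hε)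
  refine ⟨C * D, by positivity, fun s h1 h2 h3 => ?_⟩
  have : |s.im| ^ ε = |s.im| ^ (ε / 2) * |s.im| ^ (ε / 2) := by
    rw [← Real.rpow_add (by linarith)]; ring_nf
  rw [norm_mul, this]
  calc _ ≤ (C * |s.im| ^ (ε / 2)) * (D * |s.im| ^ (ε / 2)) :=
        mul_le_mul (h s h1 h2 h3) (h' s h1 h2 h3) (norm_nonneg _) (by positivity)
    _ = _ := by ring

lemma sum {ι : Type*} (S : Finset ι) {f : ι → ℂ → ℂ} (hf : ∀ i ∈ S, SubpolyGrowth (f i)) :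
    SubpolyGrowth fun s => ∑ i ∈ S, f i s := by
  classical
  induction S using Finset.induction_on with
  | empty => simpa using const 0
  | insert a S ha ih =>
    simp_rw [Finset.sum_insert ha]
    exact (hf a (by simp)).add (ih fun i hi => hf i (by simp [hi]))

/-- Cauchy estimate on a circle of fixed small radius, which may cross the line `re s = 1`. -/
lemma iteratedDeriv_riemannZeta (j : ℕ) : SubpolyGrowth (iteratedDeriv j riemannZeta) := by
  intro ε hε
  set δ : ℝ := min (ε / 2) (1 / 2) with hδ
  have hδ0 : 0 < δ := by positivity
  have hδ1 : δ ≤ 1 / 2 := min_le_right _ _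
  have hδ2 : 2 * δ ≤ ε := by linarith [min_le_left (ε / 2) (1 / 2)]
  obtain ⟨C, hC, h⟩ := norm_emZeta_le hδ0 hδ1
  refine ⟨j.factorial * (C * 2 ^ ε) / δ ^ j, by positivity, fun s h1 h2 h3 => ?_⟩
  rw [iteratedDeriv_eq_of_eqOn (fun z hz => riemannZeta_eq_emZeta hz) j h1]
  have hball : ∀ z ∈ Metric.closedBall s δ, 1 - δ ≤ z.re ∧ z.re ≤ 3 ∧ 1 / 2 ≤ |z.im| ∧
      |z.im| ≤ 2 * |s.im| := by
    intro z hz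
    have hz' : ‖z - s‖ ≤ δ := by simpa [dist_eq_norm] using hz
    have hr := (abs_re_le_norm (z - s)).trans hz'
    have hi := (abs_im_le_norm (z - s)).trans hz'
    rw [sub_re, abs_le] at hr
    rw [sub_im] at hi
    have h4 := abs_sub_abs_le_abs_sub z.im s.im
    have h5 := abs_sub_abs_le_abs_sub s.im z.im
    rw [abs_sub_comm] at h5
    exact ⟨by linarith, by linarith, by linarith, by linarith⟩
  have hdiff : ∀ z ∈ Metric.closedBall s δ, DifferentiableAt ℂ emZeta z := by
    intro z hz
    obtain ⟨a, b, c, d⟩ := hball z hz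
    refine differentiableAt_emZeta (by linarith) ?_
    rintro rfl
    norm_num at c
  have := norm_iteratedDeriv_le_of_forall_mem_sphere_norm_le (f := emZeta) (c := s) (R := δ)
    (C := C * (2 * |s.im|) ^ ε) j hδ0
    (DifferentiableOn.diffContOnCl (by
      rw [closure_ball _ hδ0.ne']
      exact fun z hz => (hdiff z hz).differentiableWithinAt)) (fun z hz => by
      obtain ⟨a, b, c, d⟩ := hball z (Metric.sphere_subset_closedBall hz)
      refine (h z a b c).trans ?_
      gcongr
      calc |z.im| ^ (2 * δ) ≤ (2 * |s.im|) ^ (2 * δ) :=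
            Real.rpow_le_rpow (abs_nonneg _) d (by positivity)
        _ ≤ (2 * |s.im|) ^ ε := Real.rpow_le_rpow_of_exponent_le (by linarith) hδ2)
  refine this.trans (le_of_eq ?_)
  rw [Real.mul_rpow (by norm_num) (abs_nonneg _)]
  ring

lemma iteratedDeriv_mul_le {f g : ℂ → ℂ} {n : ℕ}
    (hfa : ∀ s : ℂ, 1 < s.re → AnalyticAt ℂ f s) (hga : ∀ s : ℂ, 1 < s.re → AnalyticAt ℂ g s)
    (hf : ∀ j ≤ n, SubpolyGrowth (iteratedDeriv j f))
    (hg : ∀ j ≤ n, SubpolyGrowth (iteratedDeriv j g)) :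
    ∀ j ≤ n, SubpolyGrowth (iteratedDeriv j fun s => f s * g s) := by
  intro j hj
  have : SubpolyGrowth fun s => ∑ i ∈ Finset.range (j + 1),
      (j.choose i * iteratedDeriv i f s) * iteratedDeriv (j - i) g s := by
    refine sum _ fun i hi => ?_
    have hi' : i ≤ j := Nat.lt_succ_iff.mp (Finset.mem_range.mp hi)
    exact ((const _).mul (hf i (hi'.trans hj))).mul (hg (j - i) ((Nat.sub_le _ _).trans hj))
  refine this.congr fun s hs => ?_
  exact (iteratedDeriv_fun_mul (hfa s hs).contDiffAt (hga s hs).contDiffAt).symm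

lemma iteratedDeriv_const_fun (c : ℂ) (j : ℕ) : SubpolyGrowth (iteratedDeriv j fun _ => c) :=
  (const (if j = 0 then c else 0)).congr fun s _ => by rw [iteratedDeriv_const]

/-- Induction on the order, from `deriv (1 / f) = -deriv f * (1 / f) * (1 / f)` and the Leibniz rule. -/
lemma iteratedDeriv_inv {f : ℂ → ℂ} (hfa : ∀ s : ℂ, 1 < s.re → AnalyticAt ℂ f s)
    (h0 : ∀ s : ℂ, 1 < s.re → f s ≠ 0) (hf : ∀ j, SubpolyGrowth (iteratedDeriv j f))
    (hinv : SubpolyGrowth fun s => (f s)⁻¹) (n : ℕ) :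
    ∀ j ≤ n, SubpolyGrowth (iteratedDeriv j fun s => (f s)⁻¹) := by
  have hia : ∀ s : ℂ, 1 < s.re → AnalyticAt ℂ (fun s => (f s)⁻¹) s :=
    fun s hs => (hfa s hs).inv (h0 s hs)
  have hda : ∀ s : ℂ, 1 < s.re → AnalyticAt ℂ (deriv f) s := fun s hs => (hfa s hs).deriv
  have hd : ∀ s : ℂ, 1 < s.re →
      ((-1) * deriv f s) * ((f s)⁻¹ * (f s)⁻¹) = deriv (fun s => (f s)⁻¹) s := by
    intro s hs
    rw [deriv_fun_inv'' (hfa s hs).differentiableAt (h0 s hs)]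
    field_simp
  induction n with
  | zero =>
    intro j hj
    obtain rfl : j = 0 := by omega
    simpa using hinv
  | succ n ih =>
    intro j hj
    rcases j with _ | j
    · simpa using hinv
    rw [iteratedDeriv_succ']
    have h1 : ∀ j ≤ n, SubpolyGrowth (iteratedDeriv j fun s => (-1) * deriv f s) := by
      refine iteratedDeriv_mul_le (fun s _ => analyticAt_const) hda (fun j _ => ?_) (fun j _ => ?_)
      · exact iteratedDeriv_const_fun _ _
      · rw [← iteratedDeriv_succ']; exact hf _
    have h2 := iteratedDeriv_mul_le (fun s hs => analyticAt_const.mul (hda s hs))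
      (fun s hs => (hia s hs).mul (hia s hs)) h1 (iteratedDeriv_mul_le hia hia ih ih)
    exact (h2 j (by omega)).congr fun s hs => iteratedDeriv_eq_of_eqOn hd j hs

end SubpolyGrowth

/-! ### Growth of the reciprocal of zeta and of its logarithmic derivative -/

/-- The `3-4-1` inequality of Mertens. -/
lemma one_le_norm_riemannZeta_product {x : ℝ} (hx : 0 < x) (y : ℝ) :
    1 ≤ ‖riemannZeta (1 + x)‖ ^ 3 * ‖riemannZeta (1 + x + I * y)‖ ^ 4 *
      ‖riemannZeta (1 + x + 2 * I * y)‖ := by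
  have := DirichletCharacter.norm_LFunction_product_ge_one (1 : DirichletCharacter ℂ 1) hx y
  simpa [DirichletCharacter.LFunctionTrivChar, DirichletCharacter.LFunction_modOne_eq] using this

lemma norm_riemannZeta_one_add_le : ∃ D : ℝ, 1 ≤ D ∧ ∀ x : ℝ, 0 < x → x ≤ 1 →
    ‖riemannZeta (1 + x)‖ ≤ D / x := by
  have hc : ContinuousOn (fun x : ℝ => riemannZeta₁ (1 + x)) (Set.Icc 0 1) :=
    (differentiable_riemannZeta₁.continuous.comp (by fun_prop)).continuousOn
  obtain ⟨D, hD⟩ := isCompact_Icc.exists_bound_of_continuousOn hc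
  refine ⟨max D 1, le_max_right _ _, fun x h0 h1 => ?_⟩
  have hne : (1 + x : ℂ) ≠ 1 := by simpa using h0.ne'
  rw [riemannZeta_eq_inv_sub_mul hne, norm_mul, div_eq_inv_mul, norm_inv]
  have : ‖(1 + x : ℂ) - 1‖ = x := by simp [abs_of_pos h0]
  rw [this]
  gcongr
  exact (hD x ⟨h0.le, h1⟩).trans (le_max_left _ _)

lemma analyticAt_riemannZeta {s : ℂ} (hs : 1 < s.re) : AnalyticAt ℂ riemannZeta s := by
  refine (differentiableOn_riemannZeta).analyticAt (isOpen_compl_singleton.mem_nhds ?_)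
  rintro rfl
  simp at hs

/-- A quantitative nonvanishing of zeta up to the line `re s = 1`. With `T` a small power of the
height, the `3-4-1` inequality bounds `|ζ|` below by about `w ^ 3 / T` as soon as
`re s - 1 ≥ w ^ 4`. The derivative is `O(T ^ 4)`, so moving from there to the line changes `ζ` by
`O(w ^ 4 * T ^ 4)`, which is at most half of the lower bound when `w` is a small multiple of
`T ^ (-5)`. -/
lemma SubpolyGrowth.inv_riemannZeta : SubpolyGrowth fun s => (riemannZeta s)⁻¹ := by
  intro ε hε
  set δ : ℝ := ε / 16 with hδ
  have hδ0 : 0 < δ := by positivity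
  obtain ⟨C₁, hC₁, h₁⟩ := SubpolyGrowth.iteratedDeriv_riemannZeta 0 (4 * δ) (by positivity)
  obtain ⟨C₂', hC₂', h₂⟩ := SubpolyGrowth.iteratedDeriv_riemannZeta 1 (4 * δ) (by positivity)
  simp only [iteratedDeriv_zero, iteratedDeriv_one] at h₁ h₂
  obtain ⟨D, hD, h₀⟩ := norm_riemannZeta_one_add_le
  set C₂ := max C₂' 1 with hC₂
  have hC₂1 : 1 ≤ C₂ := le_max_right _ _
  set κ : ℝ := (max (D ^ 3 * (C₁ * 2 ^ (4 * δ))) 1) ^ (1 / 4 : ℝ) with hκ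
  have hκ1 : 1 ≤ κ := Real.one_le_rpow (le_max_right _ _) (by norm_num)
  have hκ4 : D ^ 3 * (C₁ * 2 ^ (4 * δ)) ≤ κ ^ 4 := by
    rw [hκ, ← Real.rpow_natCast _ 4, ← Real.rpow_mul (by positivity)]
    norm_num
  set a : ℝ := 1 / (2 * C₂ * κ) with ha
  have ha0 : 0 < a := by positivity
  have ha1 : a ≤ 1 := by
    rw [ha, div_le_one (by positivity)]; nlinarith
  refine ⟨2 * κ / a ^ 3, by positivity, fun s hs1 hs2 hs3 => ?_⟩
  set t := |s.im| with ht
  set T : ℝ := t ^ δ with hT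
  have hT1 : 1 ≤ T := Real.one_le_rpow hs3 hδ0.le
  have hTn (n : ℕ) : t ^ (n * δ) = T ^ n := by
    rw [hT, ← Real.rpow_natCast, ← Real.rpow_mul (by linarith)]; ring_nf
  have hT4 : t ^ (4 * δ) = T ^ 4 := by simpa using hTn 4
  have hT16 : t ^ ε = T ^ 16 := by rw [← hTn 16, hδ]; congr 1; push_cast; ring
  set w : ℝ := a / T ^ 5 with hw
  have hw0 : 0 < w := by positivity
  have hw1 : w ≤ 1 := by
    rw [hw, div_le_one (by positivity)]
    exact ha1.trans (one_le_pow₀ hT1)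
  -- The `3-4-1` inequality at distance at least `w ^ 4` from the line `re s = 1`.
  have far : ∀ x : ℝ, w ^ 4 ≤ x → x ≤ 1 → w ^ 3 / (κ * T) ≤ ‖riemannZeta (1 + x + I * s.im)‖ := by
    intro x hx hx1
    have hx0 : 0 < x := lt_of_lt_of_le (by positivity) hx
    have p := one_le_norm_riemannZeta_product hx0 s.im
    have q₁ := h₀ x hx0 hx1
    have q₂ := h₁ (1 + x + 2 * I * s.im) (by simpa using hx0) (by simp; linarith) (by
      simp [abs_mul]; linarith)
    have him : |(1 + (x : ℂ) + 2 * I * s.im).im| = 2 * t := by simp [abs_mul, ht]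
    rw [him, Real.mul_rpow (by norm_num) (by linarith), hT4] at q₂
    set Z := ‖riemannZeta (1 + x + I * s.im)‖ with hZ
    have hZ0 : 0 ≤ Z := norm_nonneg _
    have e1 : 1 ≤ (D / x) ^ 3 * Z ^ 4 * (C₁ * (2 ^ (4 * δ) * T ^ 4)) := p.trans (by gcongr)
    have e2 : x ^ 3 ≤ (κ * T * Z) ^ 4 := by
      calc x ^ 3 ≤ x ^ 3 * ((D / x) ^ 3 * Z ^ 4 * (C₁ * (2 ^ (4 * δ) * T ^ 4))) :=
            le_mul_of_one_le_right (by positivity) e1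
        _ = (D ^ 3 * (C₁ * 2 ^ (4 * δ))) * (T ^ 4 * Z ^ 4) := by field_simp
        _ ≤ κ ^ 4 * (T ^ 4 * Z ^ 4) := by gcongr
        _ = _ := by ring
    have e3 : (w ^ 3) ^ 4 ≤ (κ * T * Z) ^ 4 := by
      calc (w ^ 3) ^ 4 = (w ^ 4) ^ 3 := by ring
        _ ≤ x ^ 3 := by gcongr
        _ ≤ _ := e2
    have e4 := le_of_pow_le_pow_left₀ (by norm_num) (by positivity) e3
    rw [div_le_iff₀ (by positivity)]
    linarith
  have hgap : w ^ 4 * (C₂ * T ^ 4) ≤ w ^ 3 / (2 * κ * T) := by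
    rw [le_div_iff₀ (by positivity)]
    have : w * T ^ 5 * (2 * C₂ * κ) = 1 := by
      rw [hw, div_mul_cancel₀ _ (by positivity), ha]; field_simp
    calc w ^ 4 * (C₂ * T ^ 4) * (2 * κ * T) = w ^ 3 * (w * T ^ 5 * (2 * C₂ * κ)) := by ring
      _ = w ^ 3 := by rw [this, mul_one]
      _ ≤ w ^ 3 := le_rfl
  have hhalf : w ^ 3 / (κ * T) = w ^ 3 / (2 * κ * T) + w ^ 3 / (2 * κ * T) := by
    field_simp; norm_num
  have hmain : w ^ 3 / (2 * κ * T) ≤ ‖riemannZeta s‖ := by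
    have hse : s = 1 + ((s.re - 1 : ℝ) : ℂ) + I * s.im := by
      apply Complex.ext <;> simp
    rcases le_total (w ^ 4) (s.re - 1) with hcase | hcase
    · have := far (s.re - 1) hcase (by linarith)
      rw [← hse] at this
      have : 0 ≤ w ^ 3 / (2 * κ * T) := by positivity
      linarith
    · have hw4 : w ^ 4 ≤ 1 := pow_le_one₀ hw0.le hw1
      have f := far (w ^ 4) le_rfl hw4
      set z : ℂ := 1 + ((w ^ 4 : ℝ) : ℂ) + I * s.im with hz
      have hzre : z.re = 1 + w ^ 4 := by simp [hz, - ofReal_pow]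
      have hzim : z.im = s.im := by simp [hz, - ofReal_pow]
      have hconv : Convex ℝ {u : ℂ | 1 < u.re ∧ u.re ≤ 2 ∧ u.im = s.im} := by
        refine (convex_halfSpace_gt (𝕜 := ℝ) reCLM.isLinear 1).inter
          ((convex_halfSpace_le (𝕜 := ℝ) reCLM.isLinear 2).inter
          (convex_hyperplane (𝕜 := ℝ) imCLM.isLinear s.im))
      have m := hconv.norm_image_sub_le_of_norm_deriv_le (𝕜 := ℂ) (f := riemannZeta)
        (C := C₂ * T ^ 4) (x := z) (y := s)
        (fun u hu => (analyticAt_riemannZeta hu.1).differentiableAt)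
        (fun u hu => by
          have := h₂ u hu.1 hu.2.1 (by rw [hu.2.2]; exact hs3)
          rw [hu.2.2, ← ht, hT4] at this
          refine this.trans ?_
          gcongr
          exact le_max_left _ _)
        ⟨by rw [hzre]; linarith [pow_pos hw0 4], by rw [hzre]; linarith, hzim⟩ ⟨hs1, hs2, rfl⟩
      have hd : ‖s - z‖ ≤ w ^ 4 := by
        refine (norm_le_abs_re_add_abs_im _).trans ?_
        rw [sub_re, sub_im, hzre, hzim, sub_self, abs_zero, add_zero, abs_le]
        constructor <;> linarith
      have m2 : C₂ * T ^ 4 * ‖s - z‖ ≤ w ^ 3 / (2 * κ * T) := by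
        refine le_trans ?_ hgap
        rw [mul_comm]
        gcongr
      have m3 := norm_sub_norm_le (riemannZeta z) (riemannZeta s)
      rw [norm_sub_rev] at m3
      linarith
  rw [norm_inv, hT16]
  calc ‖riemannZeta s‖⁻¹ ≤ (w ^ 3 / (2 * κ * T))⁻¹ := by gcongr
    _ = 2 * κ / a ^ 3 * T ^ 16 := by rw [hw]; field_simp

/-- The function `-deriv ζ / ζ - ζ`, which for `re s > 1` is the Dirichlet series of `Λ - 1`. It is written
as a sum of products so that the Leibniz rule applies as it stands. -/
noncomputable def zetaDefect (s : ℂ) : ℂ := (-1 * deriv riemannZeta s) * (riemannZeta s)⁻¹ +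
  (-1) * riemannZeta s

lemma SubpolyGrowth.iteratedDeriv_zetaDefect (n : ℕ) :
    SubpolyGrowth (iteratedDeriv n zetaDefect) := by
  have hza : ∀ s : ℂ, 1 < s.re → AnalyticAt ℂ riemannZeta s := fun s => analyticAt_riemannZeta
  have hda : ∀ s : ℂ, 1 < s.re → AnalyticAt ℂ (deriv riemannZeta) s := fun s hs => (hza s hs).deriv
  have hz0 : ∀ s : ℂ, 1 < s.re → riemannZeta s ≠ 0 :=
    fun s hs => riemannZeta_ne_zero_of_one_lt_re hs
  have hia : ∀ s : ℂ, 1 < s.re → AnalyticAt ℂ (fun s => (riemannZeta s)⁻¹) s :=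
    fun s hs => (hza s hs).inv (hz0 s hs)
  have hca : ∀ s : ℂ, 1 < s.re → AnalyticAt ℂ (fun _ => (-1 : ℂ)) s :=
    fun s _ => analyticAt_const
  have hc : ∀ j ≤ n, SubpolyGrowth (iteratedDeriv j fun _ : ℂ => (-1 : ℂ)) :=
    fun j _ => iteratedDeriv_const_fun _ _
  have h1 := iteratedDeriv_mul_le hca hda hc
    (fun j _ => by rw [← iteratedDeriv_succ']; exact iteratedDeriv_riemannZeta _)
  have h2 := iteratedDeriv_mul_le (fun s hs => (hca s hs).mul (hda s hs)) hia h1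
    (iteratedDeriv_inv hza hz0 iteratedDeriv_riemannZeta inv_riemannZeta n) n le_rfl
  have h3 := iteratedDeriv_mul_le hca hza hc (fun j _ => iteratedDeriv_riemannZeta j) n le_rfl
  refine (h2.add h3).congr fun s hs => ?_
  exact (iteratedDeriv_fun_add (((hca s hs).mul (hda s hs)).mul (hia s hs)).contDiffAt
    ((hca s hs).mul (hza s hs)).contDiffAt).symm

lemma riemannZeta₁_ne_zero {s : ℂ} (hs : 1 ≤ s.re) : riemannZeta₁ s ≠ 0 := by
  rcases eq_or_ne s 1 with rfl | h
  · simp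
  · have := riemannZeta_ne_zero_of_one_le_re hs
    rw [riemannZeta_eq_inv_sub_mul h] at this
    exact right_ne_zero_of_mul this

/-- The poles of `-deriv ζ / ζ` and of `ζ` at `s = 1` cancel: the right-hand side is analytic on
`re s ≥ 1`. -/
lemma zetaDefect_eq {s : ℂ} (hs : 1 < s.re) :
    zetaDefect s = -(deriv riemannZeta₁ s / riemannZeta₁ s) - riemannZeta₀ s := by
  have h1 : s ≠ 1 := by rintro rfl; simp at hs
  have h1' : s - 1 ≠ 0 := sub_ne_zero.mpr h1
  have h2 := riemannZeta₁_ne_zero hs.le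
  have h3 : deriv riemannZeta s =
      -((s - 1)⁻¹) ^ 2 * riemannZeta₁ s + (s - 1)⁻¹ * deriv riemannZeta₁ s := by
    have he : riemannZeta =ᶠ[𝓝 s] fun z => (z - 1)⁻¹ * riemannZeta₁ z :=
      Filter.eventuallyEq_of_mem (isOpen_ne.mem_nhds h1) fun z hz => riemannZeta_eq_inv_sub_mul hz
    rw [he.deriv_eq]
    have hi : HasDerivAt (fun z : ℂ => (z - 1)⁻¹) (-((s - 1)⁻¹) ^ 2) s := by
      refine (((hasDerivAt_id s).sub_const 1).fun_inv h1').congr_deriv ?_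
      simp [div_eq_mul_inv]
    exact (hi.mul differentiable_riemannZeta₁.differentiableAt.hasDerivAt).deriv
  have h4 := riemannZeta_eq_inv_sub_add h1
  have h5 := riemannZeta_eq_inv_sub_mul h1
  have h6 : zetaDefect s = -(deriv riemannZeta₁ s / riemannZeta₁ s) + (s - 1)⁻¹ - riemannZeta s := by
    rw [zetaDefect, h3]
    nth_rw 1 [h5]
    field_simp
    ring
  rw [h6, h4]; ring

/-- A bound valid up to the line `re s = 1` at every height: near the real axis by compactness,
elsewhere by subpolynomial growth. Any exponent less than `1` would do, as the smoothing weight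
contributes the factor `(1 + |im s|) ^ (-2)`. -/
lemma norm_iteratedDeriv_zetaDefect_le (n : ℕ) : ∃ C : ℝ, 0 ≤ C ∧ ∀ s : ℂ, 1 < s.re → s.re ≤ 2 →
    ‖iteratedDeriv n zetaDefect s‖ ≤ C * (1 + |s.im|) ^ (1 / 2 : ℝ) := by
  obtain ⟨C₁, hC₁, h₁⟩ := SubpolyGrowth.iteratedDeriv_zetaDefect n (1 / 2) (by norm_num)
  set G : ℂ → ℂ := fun s => -(deriv riemannZeta₁ s / riemannZeta₁ s) - riemannZeta₀ s with hG
  have hGa : ∀ s : ℂ, 1 ≤ s.re → AnalyticAt ℂ G s := by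
    intro s hs
    have a1 : AnalyticAt ℂ riemannZeta₁ s := differentiable_riemannZeta₁.analyticAt s
    have a0 : AnalyticAt ℂ riemannZeta₀ s := differentiable_riemannZeta₀.analyticAt s
    exact ((a1.deriv.div a1 (riemannZeta₁_ne_zero hs)).neg).sub a0
  have hcont : ContinuousOn (iteratedDeriv n G) (Set.Icc 1 2 ×ℂ Set.Icc (-1) 1) := by
    intro s hs
    refine ContinuousAt.continuousWithinAt ?_
    rw [iteratedDeriv_eq_iterate]
    exact ((hGa s hs.1.1).iterated_deriv n).continuousAt
  obtain ⟨C₂, h₂⟩ := (isCompact_Icc.reProdIm isCompact_Icc).exists_bound_of_continuousOn hcont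
  refine ⟨max C₁ C₂, le_max_of_le_left hC₁, fun s hs1 hs2 => ?_⟩
  rcases le_total 1 |s.im| with h | h
  · refine (h₁ s hs1 hs2 h).trans ?_
    gcongr
    · exact le_max_left _ _
    · linarith
  · rw [iteratedDeriv_eq_of_eqOn (fun z hz => zetaDefect_eq hz) n hs1]
    refine (h₂ s ⟨⟨hs1.le, hs2⟩, abs_le.mp h⟩).trans ?_
    refine (le_max_right C₁ C₂).trans (le_mul_of_one_le_right (le_max_of_le_left hC₁) ?_)
    exact Real.one_le_rpow (by linarith [abs_nonneg s.im]) (by norm_num)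

/-! ### Smoothed partial sums by Mellin inversion -/

/-- The Mellin transform of the tent function `u ↦ max (1 - u) 0`. -/
noncomputable def tentMellin (s : ℂ) : ℂ := 1 / s - 1 / (s + 1)

lemma norm_tentMellin_le {c : ℝ} (hc : 1 ≤ c) (y : ℝ) :
    ‖tentMellin (c + y * I)‖ ≤ 4 * (1 + ‖y‖) ^ (-2 : ℝ) := by
  have h1 : 1 + |y| ≤ 2 * ‖(c + y * I : ℂ)‖ := by
    have := abs_re_le_norm (c + y * I : ℂ)
    have := abs_im_le_norm (c + y * I : ℂ)
    simp at *
    have := le_abs_self c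
    linarith
  have h2 : 1 + |y| ≤ 2 * ‖(c + y * I + 1 : ℂ)‖ := by
    have := abs_re_le_norm (c + y * I + 1 : ℂ)
    have := abs_im_le_norm (c + y * I + 1 : ℂ)
    simp at *
    have := le_abs_self (c + 1)
    linarith
  have hy := abs_nonneg y
  have n1 : (c + y * I : ℂ) ≠ 0 := by
    intro h; rw [h] at h1; simp at h1; linarith
  have n2 : (c + y * I + 1 : ℂ) ≠ 0 := by
    intro h; rw [h] at h2; simp at h2; linarith
  have : tentMellin (c + y * I) = 1 / ((c + y * I) * (c + y * I + 1)) := by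
    unfold tentMellin; field_simp; ring
  rw [this, norm_div, norm_mul, norm_one, Real.rpow_neg (by positivity), Real.norm_eq_abs,
    Real.rpow_two, ← div_eq_mul_inv, div_le_div_iff₀ (by positivity) (by positivity)]
  nlinarith [mul_le_mul h1 h2 (by positivity) (by positivity)]

lemma continuous_tentMellin_vertical {c : ℝ} (hc : 1 ≤ c) :
    Continuous fun y : ℝ => tentMellin (c + y * I) := by
  have n1 (y : ℝ) : (c + y * I : ℂ) ≠ 0 := by
    intro h; have := congrArg re h; simp at this; linarith
  have n2 (y : ℝ) : (c + y * I + 1 : ℂ) ≠ 0 := by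
    intro h; have := congrArg re h; simp at this; linarith
  unfold tentMellin
  fun_prop (disch := assumption)

lemma integrable_one_add_abs_rpow {r : ℝ} (hr : r < -1) :
    MeasureTheory.Integrable fun y : ℝ => (1 + ‖y‖) ^ r := by
  have := integrable_one_add_norm (E := ℝ) (μ := MeasureTheory.volume) (r := -r) (by simp; linarith)
  simpa using this

lemma integrable_tentMellin {c : ℝ} (hc : 1 ≤ c) :
    MeasureTheory.Integrable fun y : ℝ => tentMellin (c + y * I) :=
  ((integrable_one_add_abs_rpow (by norm_num : (-2 : ℝ) < -1)).const_mul 4).mono'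
    (continuous_tentMellin_vertical hc).aestronglyMeasurable
    (Eventually.of_forall fun y => norm_tentMellin_le hc y)

lemma mellinInv_tentMellin {c u : ℝ} (hc : 1 ≤ c) (hu : 0 < u) :
    mellinInv c tentMellin u = (max (1 - u) 0 : ℝ) := by
  set φ : ℝ → ℂ := fun t => Set.indicator (Set.Ioc 0 1) (fun _ => 1 : ℝ → ℂ) t
    - Set.indicator (Set.Ioc 0 1) (fun t => (t : ℂ) ^ (1 : ℂ) : ℝ → ℂ) t with hφ
  have hm (s : ℂ) (hs : 0 < s.re) : HasMellin φ s (tentMellin s) := by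
    have h1 := hasMellin_one_Ioc hs
    have h2 := hasMellin_cpow_Ioc 1 (s := s) (by simp; linarith)
    have := hasMellin_sub h1.1 h2.1
    rw [h1.2, h2.2] at this
    exact this
  have hφe : ∀ t : ℝ, 0 < t → φ t = (max (1 - t) 0 : ℝ) := by
    intro t ht
    simp only [hφ, Set.indicator_apply, Set.mem_Ioc, ht, true_and, cpow_one]
    split_ifs with h
    · rw [max_eq_left (by linarith)]; push_cast; ring
    · rw [max_eq_right (by linarith)]; simp
  have hme (y : ℝ) : mellin φ (c + y * I) = tentMellin (c + y * I) :=
    (hm _ (by simp; linarith)).2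
  have key := mellinInv_mellin_eq c φ hu (hm c (by simp; linarith)).1
    (by unfold VerticalIntegrable; simp only [hme]; exact integrable_tentMellin hc)
    (by
      refine ContinuousAt.congr (f := fun t : ℝ => ((max (1 - t) 0 : ℝ) : ℂ)) (by fun_prop) ?_
      filter_upwards [lt_mem_nhds hu] with t ht
      exact (hφe t ht).symm)
  rw [hφe u hu] at key
  rw [← key]
  unfold mellinInv
  simp only [hme]

lemma integral_term_mul (a : ℕ → ℂ) {c x : ℝ} (hc : 1 ≤ c) (hx : 0 < x) {n : ℕ} (hn : n ≠ 0) :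
    ∫ y : ℝ, LSeries.term a (c + y * I) n * ((x : ℂ) ^ (c + y * I : ℂ) * tentMellin (c + y * I)) =
      2 * Real.pi * (a n * (max (1 - n / x) 0 : ℝ)) := by
  have hn' : (0 : ℝ) < n := by positivity
  have h := mellinInv_tentMellin hc (div_pos hn' hx)
  rw [mellinInv] at h
  rw [← h]
  have hpi : (Real.pi : ℂ) ≠ 0 := by exact_mod_cast Real.pi_ne_zero
  rw [Complex.real_smul]
  push_cast
  rw [show ∀ J : ℂ, 2 * (Real.pi : ℂ) * (a n * (1 / (2 * Real.pi) * J)) = a n * J from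
    fun J => by field_simp, ← MeasureTheory.integral_const_mul]
  congr 1
  ext y
  have hxc : (x : ℂ) ≠ 0 := by exact_mod_cast hx.ne'
  have hnc : (n : ℂ) ≠ 0 := by exact_mod_cast hn
  have : ((n / x : ℂ)) ^ (-(c + y * I : ℂ)) = (x : ℂ) ^ (c + y * I : ℂ) / (n : ℂ) ^ (c + y * I : ℂ) := by
    rw [cpow_neg, show (n / x : ℂ) = ((n : ℝ) : ℂ) * ((x⁻¹ : ℝ) : ℂ) by push_cast; ring,
      mul_cpow_ofReal_nonneg hn'.le (by positivity)]
    rw [ofReal_inv, inv_cpow _ _ (by rw [arg_ofReal_of_nonneg hx.le]; exact Real.pi_pos.ne)]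
    simp [div_eq_mul_inv, mul_comm]
  rw [this, LSeries.term_of_ne_zero hn, smul_eq_mul]
  ring

/-- The Perron formula with the tent weight: partial sums as vertical integrals. -/
lemma sum_tent_eq_integral {a : ℕ → ℂ} {c : ℝ} (hc : 1 ≤ c) (ha : LSeriesSummable a c) {N : ℕ}
    (hN : 0 < N) :
    2 * Real.pi * ∑ n ∈ Finset.Ioc 0 N, a n * (1 - n / N : ℝ) =
      ∫ y : ℝ, LSeries a (c + y * I) * ((N : ℂ) ^ (c + y * I : ℂ) * tentMellin (c + y * I)) := by
  have hN' : (0 : ℝ) < N := by positivity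
  have hnc : ((N : ℝ) : ℂ) ≠ 0 := by exact_mod_cast hN'.ne'
  set K : ℝ → ℂ := fun y => ((N : ℝ) : ℂ) ^ (c + y * I : ℂ) * tentMellin (c + y * I) with hK
  have hKn (y : ℝ) : ‖K y‖ = (N : ℝ) ^ c * ‖tentMellin (c + y * I)‖ := by
    rw [hK]; simp only [norm_mul]
    rw [norm_cpow_eq_rpow_re_of_pos hN']; simp
  have hKc : Continuous K :=
    (Continuous.const_cpow (by fun_prop) (Or.inl hnc)).mul (continuous_tentMellin_vertical hc)
  have htn (n : ℕ) (y : ℝ) : ‖LSeries.term a (c + y * I) n‖ = ‖LSeries.term a c n‖ := by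
    simp [LSeries.norm_term_eq]
  have htc (n : ℕ) : Continuous fun y : ℝ => LSeries.term a (c + y * I) n := by
    rcases eq_or_ne n 0 with rfl | hn
    · simp; exact continuous_const
    · simp only [LSeries.term_of_ne_zero hn]
      have hn' : (n : ℂ) ≠ 0 := by exact_mod_cast hn
      refine continuous_const.div (Continuous.const_cpow (by fun_prop) (Or.inl hn')) fun y => ?_
      simp [cpow_eq_zero_iff, hn]
  have hnorm (n : ℕ) (y : ℝ) : ‖LSeries.term a (c + y * I) n * K y‖ =
      ‖LSeries.term a c n‖ * ((N : ℝ) ^ c * ‖tentMellin (c + y * I)‖) := by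
    rw [norm_mul, hKn, htn]
  have hs := MeasureTheory.hasSum_integral_of_summable_integral_norm
    (F := fun n (y : ℝ) => LSeries.term a (c + y * I) n * K y) (μ := MeasureTheory.volume)
    (fun n => by
      refine ((((integrable_tentMellin hc).norm.const_mul ((N : ℝ) ^ c))).const_mul
        ‖LSeries.term a c n‖).mono' ((htc n).mul hKc).aestronglyMeasurable
        (Eventually.of_forall fun y => (hnorm n y).le))
    (by
      simp only [hnorm, MeasureTheory.integral_const_mul]
      exact ha.norm.mul_right _)
  have h1 : ∀ n ∉ Finset.Ioc 0 N, ∫ y : ℝ, LSeries.term a (c + y * I) n * K y = 0 := by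
    intro n hn
    rcases eq_or_ne n 0 with rfl | hn0
    · simp
    · rw [hK]
      simp only
      rw [integral_term_mul a hc hN' hn0, max_eq_right]
      · simp
      · have : N ≤ n := by simp at hn; omega
        rw [sub_nonpos, le_div_iff₀ hN']
        simpa using this
  have h2 := (hasSum_sum_of_ne_finset_zero h1).unique hs
  rw [Finset.mul_sum]
  convert h2 using 1
  · refine Finset.sum_congr rfl fun n hn => ?_
    rw [Finset.mem_Ioc] at hn
    rw [hK]
    simp only
    rw [integral_term_mul a hc hN' (by omega), max_eq_left]
    rw [sub_nonneg, div_le_one hN']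
    exact_mod_cast hn.2
  · congr 1
    ext y
    rw [tsum_mul_right]
    simp [hK, LSeries]

/-- The coefficients `(Λ n - 1) * log ^ k n`: up to sign, those of the `k`-th derivative of
`-deriv ζ / ζ - ζ`. -/
noncomputable def logWeighted (k n : ℕ) : ℝ := (ArithmeticFunction.vonMangoldt n - 1) * Real.log n ^ k

lemma logMul_iterate (f : ℕ → ℂ) (k n : ℕ) :
    (LSeries.logMul^[k] f) n = Complex.log n ^ k * f n := by
  induction k generalizing n with
  | zero => simp
  | succ k ih => rw [Function.iterate_succ_apply', LSeries.logMul, ih]; ring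

lemma logWeighted_eq (k : ℕ) : (fun n => (logWeighted k n : ℂ)) =
    LSeries.logMul^[k] ((fun n => (ArithmeticFunction.vonMangoldt n : ℂ)) - 1) := by
  ext n
  rw [logMul_iterate, logWeighted, ← natCast_log]
  push_cast
  simp; ring

lemma summable_base {s : ℂ} (hs : 1 < s.re) :
    LSeriesSummable ((fun n => (ArithmeticFunction.vonMangoldt n : ℂ)) - 1) s :=
  (ArithmeticFunction.LSeriesSummable_vonMangoldt hs).sub (LSeriesSummable_one_iff.mpr hs)

lemma abscissa_lt {s : ℂ} (hs : 1 < s.re) : LSeries.abscissaOfAbsConv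
    ((fun n => (ArithmeticFunction.vonMangoldt n : ℂ)) - 1) < s.re := by
  refine lt_of_le_of_lt (LSeries.abscissaOfAbsConv_le_of_forall_lt_LSeriesSummable (x := 1) ?_)
    (by exact_mod_cast hs)
  intro y hy
  exact summable_base (by simpa using hy)

lemma lseriesSummable_logWeighted (k : ℕ) {s : ℂ} (hs : 1 < s.re) :
    LSeriesSummable (fun n => (logWeighted k n : ℂ)) s := by
  rw [logWeighted_eq]
  apply LSeriesSummable_of_abscissaOfAbsConv_lt_re
  rw [LSeries.absicssaOfAbsConv_logPowMul]
  exact abscissa_lt hs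

lemma lseries_base {s : ℂ} (hs : 1 < s.re) :
    LSeries ((fun n => (ArithmeticFunction.vonMangoldt n : ℂ)) - 1) s = zetaDefect s := by
  rw [LSeries_sub (ArithmeticFunction.LSeriesSummable_vonMangoldt hs)
    (LSeriesSummable_one_iff.mpr hs), ArithmeticFunction.LSeries_vonMangoldt_eq_deriv_riemannZeta_div hs,
    LSeries_one_eq_riemannZeta hs, zetaDefect]
  ring

lemma norm_lseries_logWeighted (k : ℕ) {s : ℂ} (hs : 1 < s.re) :
    ‖LSeries (fun n => (logWeighted k n : ℂ)) s‖ = ‖iteratedDeriv k zetaDefect s‖ := by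
  rw [← iteratedDeriv_eq_of_eqOn (fun s hs => lseries_base hs) k hs,
    LSeries_iteratedDeriv k (abscissa_lt hs), logWeighted_eq]
  simp

/-- The smoothed partial sums are of order `N ^ 2`, whatever the power of the logarithm. -/
lemma abs_sum_logWeighted_tent_le (k : ℕ) : ∃ C : ℝ, 0 ≤ C ∧ ∀ N : ℕ, 3 ≤ N →
    |∑ n ∈ Finset.Ioc 0 N, logWeighted k n * ((N : ℝ) - n)| ≤ C * (N : ℝ) ^ 2 := by
  obtain ⟨C, hC0, hC⟩ := norm_iteratedDeriv_zetaDefect_le k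
  set J : ℝ := ∫ y : ℝ, (1 + ‖y‖) ^ (-(3 / 2) : ℝ) with hJ
  have hJ0 : 0 ≤ J := MeasureTheory.integral_nonneg fun y => by positivity
  refine ⟨Real.exp 1 * C * 4 * J, by positivity, fun N hN => ?_⟩
  have hN0 : (0 : ℝ) < N := by positivity
  have hlog : 1 < Real.log N := by
    rw [Real.lt_log_iff_exp_lt hN0]
    have : (3 : ℝ) ≤ N := by exact_mod_cast hN
    linarith [Real.exp_one_lt_three]
  -- With this abscissa the factor `N ^ c` costs only a constant.
  set c : ℝ := 1 + 1 / Real.log N with hc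
  have hc1 : 1 < c := by rw [hc]; linarith [show 0 < 1 / Real.log N by positivity]
  have hc2 : c ≤ 2 := by
    have : 1 / Real.log N ≤ 1 := by rw [div_le_one] <;> linarith
    linarith
  have hNc : (N : ℝ) ^ c = Real.exp 1 * N := by
    rw [hc, Real.rpow_add hN0, Real.rpow_one, Real.rpow_def_of_pos hN0, mul_one_div_cancel (by linarith)]
    ring
  have key := sum_tent_eq_integral hc1.le (lseriesSummable_logWeighted k (s := c) (by simpa using hc1))
    (N := N) (by omega)
  have hb : ‖∫ y : ℝ, LSeries (fun n => (logWeighted k n : ℂ)) (c + y * I) *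
      ((N : ℂ) ^ (c + y * I : ℂ) * tentMellin (c + y * I))‖ ≤
      ∫ y : ℝ, (Real.exp 1 * N * C * 4) * (1 + ‖y‖) ^ (-(3 / 2) : ℝ) := by
    refine MeasureTheory.norm_integral_le_of_norm_le
      ((integrable_one_add_abs_rpow (by norm_num)).const_mul _) (Eventually.of_forall fun y => ?_)
    rw [norm_mul, norm_mul, norm_lseries_logWeighted k (by simpa using hc1),
      ← ofReal_natCast, norm_cpow_eq_rpow_re_of_pos hN0]
    have h1 := hC (c + y * I) (by simpa using hc1) (by simpa using hc2)
    have h2 := norm_tentMellin_le hc1.le y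
    simp only [add_re, ofReal_re, mul_re, I_re, mul_zero, ofReal_im, I_im, mul_one, sub_self,
      add_zero, add_im, mul_im, zero_add] at h1 ⊢
    rw [hNc]
    have h3 : (1 + ‖y‖) ^ (-(3 / 2) : ℝ) = (1 + |y|) ^ (1 / 2 : ℝ) * (1 + ‖y‖) ^ (-2 : ℝ) := by
      rw [Real.norm_eq_abs, ← Real.rpow_add (by positivity)]; norm_num
    rw [h3]
    calc _ ≤ (C * (1 + |y|) ^ (1 / 2 : ℝ)) * (Real.exp 1 * N * (4 * (1 + ‖y‖) ^ (-2 : ℝ))) := by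
          gcongr
      _ = _ := by ring
  rw [MeasureTheory.integral_const_mul, ← key, ← hJ] at hb
  have h4 : (∑ n ∈ Finset.Ioc 0 N, (logWeighted k n : ℂ) * (1 - n / N : ℝ)) =
      ((∑ n ∈ Finset.Ioc 0 N, logWeighted k n * (1 - n / N : ℝ) : ℝ) : ℂ) := by push_cast; rfl
  have h5 : ∑ n ∈ Finset.Ioc 0 N, logWeighted k n * ((N : ℝ) - n) =
      N * ∑ n ∈ Finset.Ioc 0 N, logWeighted k n * (1 - n / N : ℝ) := by
    rw [Finset.mul_sum]
    refine Finset.sum_congr rfl fun n _ => ?_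
    field_simp
  rw [h4, norm_mul, norm_real, Real.norm_eq_abs] at hb
  have h6 : (1 : ℝ) ≤ ‖(2 * Real.pi : ℂ)‖ := by
    rw [norm_mul, norm_real, Real.norm_of_nonneg Real.pi_pos.le]
    simp; linarith [Real.pi_gt_three]
  rw [h5, abs_mul, abs_of_pos hN0]
  have h7 := (le_mul_of_one_le_left (abs_nonneg _) h6).trans hb
  calc _ ≤ (N : ℝ) * (Real.exp 1 * N * C * 4 * J) := by gcongr
    _ = _ := by ring

/-! ### Removing the smoothing -/

lemma neg_log_pow_le_logWeighted (k : ℕ) {n X : ℕ} (hn : 0 < n) (hX : n ≤ X) :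
    -(Real.log X ^ k) ≤ logWeighted k n := by
  have h1 : (1 : ℝ) ≤ n := by exact_mod_cast hn
  have h0 : 0 ≤ Real.log n := Real.log_nonneg h1
  have h2 : Real.log n ^ k ≤ Real.log X ^ k := by gcongr
  have h3 := ArithmeticFunction.vonMangoldt_nonneg (n := n)
  have h4 : 0 ≤ Real.log n ^ k := by positivity
  rw [logWeighted]
  nlinarith [mul_nonneg h3 h4]

/-- Sums of `logWeighted k` over a block of length `h` against weights between `0` and `h` are not
very negative, because `Λ` is nonnegative. -/
lemma neg_le_sum_block (k M h : ℕ) {w : ℕ → ℝ} (hw0 : ∀ n ∈ Finset.Ioc M (M + h), 0 ≤ w n)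
    (hw1 : ∀ n ∈ Finset.Ioc M (M + h), w n ≤ h) :
    -((h : ℝ) ^ 2 * Real.log (M + h : ℕ) ^ k) ≤
      ∑ n ∈ Finset.Ioc M (M + h), logWeighted k n * w n := by
  have hL : 0 ≤ Real.log (M + h : ℕ) ^ k := pow_nonneg (Real.log_natCast_nonneg _) _
  have : ∀ n ∈ Finset.Ioc M (M + h), -((h : ℝ) * Real.log (M + h : ℕ) ^ k) ≤
      logWeighted k n * w n := by
    intro n hn
    have h1 := neg_log_pow_le_logWeighted k (n := n) (X := M + h)
      (by rw [Finset.mem_Ioc] at hn; omega) (Finset.mem_Ioc.mp hn).2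
    have h2 := hw0 n hn
    have h3 := hw1 n hn
    nlinarith [mul_nonneg h2 (by linarith : 0 ≤ logWeighted k n + Real.log (M + h : ℕ) ^ k),
      mul_nonneg hL (by linarith : 0 ≤ (h : ℝ) - w n)]
  have := Finset.card_nsmul_le_sum _ _ _ this
  rw [Nat.card_Ioc, nsmul_eq_mul, Nat.add_sub_cancel_left] at this
  linarith

/-- Unsmoothing: with `A` the tent-smoothed sum and `E` the plain one, the differences
`A (M + h) - A M` and `A M - A (M - h)` are `h * E M` plus, respectively minus, a block sum that
`neg_le_sum_block` bounds from below. -/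
lemma abs_sum_logWeighted_le (k : ℕ) : ∃ C : ℝ, 0 ≤ C ∧ ∀ M h : ℕ, 6 ≤ M → 0 < h → 2 * h ≤ M →
    |∑ n ∈ Finset.Ioc 0 M, logWeighted k n| ≤
      C * ((M : ℝ) ^ 2 / h) + h * Real.log (2 * M : ℕ) ^ k := by
  obtain ⟨C, hC0, hC⟩ := abs_sum_logWeighted_tent_le k
  refine ⟨5 * C, by positivity, fun M h hM hh hhM => ?_⟩
  obtain ⟨L, rfl⟩ : ∃ L, M = L + h := ⟨M - h, by omega⟩
  set M := L + h with hMdef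
  have hh' : (0 : ℝ) < h := by exact_mod_cast hh
  have hMr : (M : ℝ) = L + h := by rw [hMdef]; push_cast; ring
  have hhM' : 2 * (h : ℝ) ≤ M := by exact_mod_cast hhM
  have split (X : ℕ) (f : ℕ → ℝ) : ∑ n ∈ Finset.Ioc 0 (X + h), f n =
      ∑ n ∈ Finset.Ioc 0 X, f n + ∑ n ∈ Finset.Ioc X (X + h), f n :=
    (Finset.sum_Ioc_consecutive f (Nat.zero_le _) (Nat.le_add_right _ _)).symm
  have hlog {X : ℕ} (hX0 : 0 < X) (hX : X ≤ 2 * M) :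
      Real.log X ^ k ≤ Real.log (2 * M : ℕ) ^ k := by
    have : (0 : ℝ) < X := by exact_mod_cast hX0
    have : 0 ≤ Real.log X := Real.log_natCast_nonneg _
    gcongr
  have hA1 := abs_le.mp (hC M (by omega))
  have hA2 := abs_le.mp (hC (M + h) (by omega))
  have hA3 := abs_le.mp (hC L (by omega))
  have hLM : (L : ℝ) ^ 2 ≤ (M : ℝ) ^ 2 := by gcongr; omega
  have hMM : ((M + h : ℕ) : ℝ) ^ 2 ≤ 4 * (M : ℝ) ^ 2 := by push_cast; nlinarith
  have hCL := mul_le_mul_of_nonneg_left hLM hC0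
  have hCM := mul_le_mul_of_nonneg_left hMM hC0
  have hCMn : 0 ≤ C * (M : ℝ) ^ 2 := by positivity
  set E := ∑ n ∈ Finset.Ioc 0 M, logWeighted k n with hE
  have e1 : ∑ n ∈ Finset.Ioc 0 (M + h), logWeighted k n * (((M + h : ℕ) : ℝ) - n) =
      ∑ n ∈ Finset.Ioc 0 M, logWeighted k n * ((M : ℝ) - n) + h * E +
      ∑ n ∈ Finset.Ioc M (M + h), logWeighted k n * (((M + h : ℕ) : ℝ) - n) := by
    rw [split, hE, Finset.mul_sum, ← Finset.sum_add_distrib]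
    congr 1
    refine Finset.sum_congr rfl fun n _ => ?_
    push_cast; ring
  have e2 : h * E = ∑ n ∈ Finset.Ioc 0 M, logWeighted k n * ((M : ℝ) - n) -
      ∑ n ∈ Finset.Ioc 0 L, logWeighted k n * ((L : ℝ) - n) +
      ∑ n ∈ Finset.Ioc L (L + h), logWeighted k n * (h - ((M : ℝ) - n)) := by
    rw [hE, hMdef, split L, split L, mul_add, Finset.mul_sum, Finset.mul_sum, add_sub_right_comm,
      ← Finset.sum_sub_distrib, add_assoc, ← Finset.sum_add_distrib]
    congr 1 <;> refine Finset.sum_congr rfl fun n _ => ?_ <;> push_cast <;> ring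
  have b1 := neg_le_sum_block k M h (w := fun n => ((M + h : ℕ) : ℝ) - n)
    (fun n hn => by
      have : (n : ℝ) ≤ (M + h : ℕ) := by exact_mod_cast (Finset.mem_Ioc.mp hn).2
      linarith)
    (fun n hn => by
      have : (M : ℝ) ≤ n := by exact_mod_cast (Finset.mem_Ioc.mp hn).1.le
      push_cast; linarith)
  have b2 := neg_le_sum_block k L h (w := fun n => h - ((M : ℝ) - n))
    (fun n hn => by
      have : (L : ℝ) ≤ n := by exact_mod_cast (Finset.mem_Ioc.mp hn).1.le
      linarith)
    (fun n hn => by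
      have : (n : ℝ) ≤ (L + h : ℕ) := by exact_mod_cast (Finset.mem_Ioc.mp hn).2
      push_cast at this; linarith)
  have l1 := mul_le_mul_of_nonneg_left (hlog (X := M + h) (by omega) (by omega)) (sq_nonneg (h : ℝ))
  have l2 := mul_le_mul_of_nonneg_left (hlog (X := L + h) (by omega) (by omega)) (sq_nonneg (h : ℝ))
  have u1 : h * E ≤ 5 * C * (M : ℝ) ^ 2 + h ^ 2 * Real.log (2 * M : ℕ) ^ k := by linarith
  have u2 : -(5 * C * (M : ℝ) ^ 2 + h ^ 2 * Real.log (2 * M : ℕ) ^ k) ≤ h * E := by linarith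
  have u3 : |h * E| ≤ 5 * C * (M : ℝ) ^ 2 + h ^ 2 * Real.log (2 * M : ℕ) ^ k :=
    abs_le.mpr ⟨u2, u1⟩
  rw [abs_mul, abs_of_pos hh'] at u3
  rw [← mul_le_mul_iff_right₀ hh']
  refine u3.trans (le_of_eq ?_)
  field_simp

lemma eventually_log_pow_le (m : ℕ) {c : ℝ} (hc : 0 < c) :
    ∀ᶠ N : ℕ in atTop, Real.log N ^ m ≤ c * N := by
  have h := (Real.isLittleO_pow_log_id_atTop (n := m)).bound hc
  filter_upwards [tendsto_natCast_atTop_atTop.eventually h] with N hN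
  refine (le_abs_self _).trans ?_
  simpa using hN

lemma tendsto_log_natCast : Tendsto (fun N : ℕ => Real.log N) atTop atTop :=
  Real.tendsto_log_atTop.comp tendsto_natCast_atTop_atTop

/-- Choosing the block length `N / log ^ m N` balances the two error terms. -/
lemma eventually_abs_sum_logWeighted_le {m : ℕ} (hm : m ≠ 0) : ∃ C : ℝ, 0 ≤ C ∧
    ∀ᶠ N : ℕ in atTop, |∑ n ∈ Finset.Ioc 0 N, logWeighted (2 * m) n| ≤
      C * (N * Real.log N ^ m) := by
  obtain ⟨C, hC0, hC⟩ := abs_sum_logWeighted_le (2 * m)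
  refine ⟨C + 2 * 4 ^ m, by positivity, ?_⟩
  filter_upwards [eventually_ge_atTop 6, eventually_log_pow_le m one_pos,
    ((tendsto_pow_atTop hm).comp tendsto_log_natCast).eventually_ge_atTop 4] with N hN h1 h4
  simp only [Function.comp_apply] at h4
  have hN' : (6 : ℝ) ≤ N := by exact_mod_cast hN
  have hl : 0 ≤ Real.log N := Real.log_natCast_nonneg _
  have hlp : 0 < Real.log N ^ m := by linarith
  set x := (N : ℝ) / Real.log N ^ m with hx
  have hx1 : 1 ≤ x := by rw [hx, one_le_div hlp]; linarith
  have hx4 : x ≤ N / 4 := by rw [hx]; gcongr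
  have hxh := Nat.le_ceil x
  have hhx : (⌈x⌉₊ : ℝ) < x + 1 := Nat.ceil_lt_add_one (by linarith)
  have hh0 : 0 < ⌈x⌉₊ := Nat.ceil_pos.mpr (by linarith)
  have hb := hC N ⌈x⌉₊ hN hh0 (by
    have : (2 : ℝ) * ⌈x⌉₊ ≤ N := by linarith
    exact_mod_cast this)
  have t1 : (N : ℝ) ^ 2 / ⌈x⌉₊ ≤ N * Real.log N ^ m := by
    calc (N : ℝ) ^ 2 / ⌈x⌉₊ ≤ (N : ℝ) ^ 2 / x := by gcongr
      _ = _ := by rw [hx]; field_simp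
  have t2 : Real.log (2 * N : ℕ) ≤ 2 * Real.log N := by
    push_cast
    rw [Real.log_mul (by norm_num) (by linarith)]
    have : Real.log 2 ≤ Real.log N := Real.log_le_log (by norm_num) (by linarith)
    linarith
  have t3 : (⌈x⌉₊ : ℝ) * Real.log (2 * N : ℕ) ^ (2 * m) ≤ 2 * 4 ^ m * (N * Real.log N ^ m) := by
    have h0 : 0 ≤ Real.log (2 * N : ℕ) := Real.log_natCast_nonneg _
    calc (⌈x⌉₊ : ℝ) * Real.log (2 * N : ℕ) ^ (2 * m)
        ≤ (2 * x) * (2 * Real.log N) ^ (2 * m) := by gcongr; linarith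
      _ = _ := by rw [hx, mul_pow, pow_mul, pow_mul, show (2 : ℝ) ^ 2 = 4 by norm_num]; field_simp
                  ring
  calc _ ≤ _ := hb
    _ ≤ C * (N * Real.log N ^ m) + 2 * 4 ^ m * (N * Real.log N ^ m) := by gcongr
    _ = _ := by ring

/-! ### The prime number theorem with a power of the logarithm saved -/

/-- Abel's inequality for a nonincreasing nonnegative weight. -/
lemma abs_sum_mul_antitone_le {a g : ℕ → ℝ} {q M : ℕ} {D : ℝ} (hqM : q ≤ M)
    (hg : ∀ i, q ≤ i → g (i + 1) ≤ g i) (hg0 : 0 ≤ g M)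
    (hD : ∀ j, q ≤ j → j ≤ M → |∑ n ∈ Finset.Ioc q j, a n| ≤ D) :
    |∑ n ∈ Finset.Ioc q M, a n * g n| ≤ D * g q := by
  have key : ∀ j, q ≤ j → j ≤ M → |∑ n ∈ Finset.Ioc q j, a n * g n -
      (∑ n ∈ Finset.Ioc q j, a n) * g j| ≤ D * (g q - g j) := by
    intro j hj
    induction j, hj using Nat.le_induction with
    | base => simp
    | succ j hj ih =>
      intro hjM
      have h1 := ih (by omega)
      have h2 := hD j hj (by omega)
      have h3 := hg j hj
      rw [Finset.sum_Ioc_succ_top hj, Finset.sum_Ioc_succ_top hj]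
      calc _ = |(∑ n ∈ Finset.Ioc q j, a n * g n - (∑ n ∈ Finset.Ioc q j, a n) * g j) +
            (∑ n ∈ Finset.Ioc q j, a n) * (g j - g (j + 1))| := by congr 1; ring
        _ ≤ D * (g q - g j) + D * (g j - g (j + 1)) := by
          refine (abs_add_le _ _).trans (add_le_add h1 ?_)
          rw [abs_mul, abs_of_nonneg (a := g j - g (j + 1)) (by linarith)]
          gcongr
        _ = _ := by ring
  have h1 := key M hqM le_rfl
  have h2 := hD M hqM le_rfl
  calc _ = |(∑ n ∈ Finset.Ioc q M, a n * g n - (∑ n ∈ Finset.Ioc q M, a n) * g M) +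
        (∑ n ∈ Finset.Ioc q M, a n) * g M| := by congr 1; ring
    _ ≤ D * (g q - g M) + D * g M := by
      refine (abs_add_le _ _).trans (add_le_add h1 ?_)
      rw [abs_mul, abs_of_nonneg hg0]
      gcongr
    _ = _ := by ring

/-- The prime number theorem for `ψ`, saving an arbitrary power of the logarithm. The weight
`log ^ (2 * m)` is removed by partial summation from `√N` on, and the terms up to `√N` are bounded
trivially. -/
lemma eventually_abs_psi_sub_le {m : ℕ} (hm : m ≠ 0) : ∃ C : ℝ, 0 ≤ C ∧
    ∀ᶠ N : ℕ in atTop, |Chebyshev.psi N - N| ≤ C * (N / Real.log N ^ m) := by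
  obtain ⟨C, hC0, hC⟩ := eventually_abs_sum_logWeighted_le hm
  obtain ⟨N₀, hN₀⟩ := eventually_atTop.mp hC
  refine ⟨(Real.log 4 + 4) + 1 + 2 * C * 9 ^ m, by positivity, ?_⟩
  filter_upwards [eventually_ge_atTop (N₀ ^ 2), eventually_ge_atTop 16,
    eventually_log_pow_le (2 * m) one_pos] with N hN hN16 hlog
  set q := Nat.sqrt N with hq
  have hq1 : N₀ ≤ q := Nat.le_sqrt'.mpr hN
  have hq4 : 4 ≤ q := Nat.le_sqrt'.mpr hN16
  have hqN : q ≤ N := Nat.sqrt_le_self N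
  have hq2 : q ^ 2 ≤ N := Nat.sqrt_le' N
  have hq3 : N ≤ q ^ 3 := by
    have : N < (q + 1) ^ 2 := Nat.lt_succ_sqrt' N
    nlinarith [sq_nonneg q, Nat.mul_le_mul_right (q ^ 2) hq4]
  have hN1 : (16 : ℝ) ≤ N := by exact_mod_cast hN16
  have hlN : 0 < Real.log N := Real.log_pos (by linarith)
  have hqr : (4 : ℝ) ≤ q := by exact_mod_cast hq4
  have hlq : 0 < Real.log q := Real.log_pos (by linarith)
  have hlqN : Real.log N ≤ 3 * Real.log q := by
    rw [show 3 * Real.log q = Real.log ((q : ℝ) ^ 3) by rw [Real.log_pow]; norm_num]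
    exact Real.log_le_log (by linarith) (by exact_mod_cast hq3)
  set D : ℝ := 2 * (C * (N * Real.log N ^ m)) with hDdef
  have hE (j : ℕ) (hj : q ≤ j) (hjN : j ≤ N) :
      |∑ n ∈ Finset.Ioc 0 j, logWeighted (2 * m) n| ≤ C * (N * Real.log N ^ m) := by
    have : (0 : ℝ) < j := by exact_mod_cast (by omega : 0 < j)
    have := Real.log_natCast_nonneg j
    refine (hN₀ j (by omega)).trans ?_
    gcongr
  have hD (j : ℕ) (hj : q ≤ j) (hjN : j ≤ N) :
      |∑ n ∈ Finset.Ioc q j, logWeighted (2 * m) n| ≤ D := by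
    have h1 := Finset.sum_Ioc_consecutive (logWeighted (2 * m)) (Nat.zero_le q) hj
    have h2 : ∑ n ∈ Finset.Ioc q j, logWeighted (2 * m) n =
      ∑ n ∈ Finset.Ioc 0 j, logWeighted (2 * m) n - ∑ n ∈ Finset.Ioc 0 q, logWeighted (2 * m) n := by
      linarith
    rw [h2]
    refine (abs_sub _ _).trans ((add_le_add (hE j hj hjN) (hE q le_rfl hqN)).trans_eq ?_)
    rw [hDdef]; ring
  have hsum := abs_sum_mul_antitone_le (a := logWeighted (2 * m))
    (g := fun n => (Real.log n ^ (2 * m))⁻¹) hqN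
    (fun i hi => by
      have : (4 : ℝ) ≤ i := by exact_mod_cast hq4.trans hi
      have : 0 < Real.log i := Real.log_pos (by linarith)
      gcongr
      linarith)
    (by positivity) hD
  have hS2 : ∑ n ∈ Finset.Ioc q N, logWeighted (2 * m) n * (Real.log n ^ (2 * m))⁻¹ =
      ∑ n ∈ Finset.Ioc q N, (ArithmeticFunction.vonMangoldt n - 1) := by
    refine Finset.sum_congr rfl fun n hn => ?_
    have : (4 : ℝ) ≤ n := by exact_mod_cast hq4.trans (Finset.mem_Ioc.mp hn).1.le
    have : 0 < Real.log n := Real.log_pos (by linarith)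
    rw [logWeighted, mul_inv_cancel_right₀ (by positivity)]
  have hpsi (X : ℕ) : Chebyshev.psi X - X =
      ∑ n ∈ Finset.Ioc 0 X, (ArithmeticFunction.vonMangoldt n - 1) := by
    simp [Chebyshev.psi]
  have hS1 : |∑ n ∈ Finset.Ioc 0 q, (ArithmeticFunction.vonMangoldt n - 1)| ≤
      (Real.log 4 + 4 + 1) * q := by
    rw [← hpsi, abs_le]
    have h1 := Chebyshev.psi_le_const_mul_self (x := q) (by positivity)
    have h2 := Chebyshev.psi_nonneg q
    have h3 : 0 < Real.log 4 := Real.log_pos (by norm_num)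
    constructor <;> nlinarith
  have hqlog : (q : ℝ) ≤ N / Real.log N ^ m := by
    rw [le_div_iff₀ (by positivity)]
    have h1 : (q : ℝ) ^ 2 ≤ N := by exact_mod_cast hq2
    rw [one_mul, mul_comm, pow_mul] at hlog
    refine le_of_sq_le_sq ?_ (by positivity)
    rw [mul_pow, sq (N : ℝ)]
    gcongr
  have hgq : D * (Real.log q ^ (2 * m))⁻¹ ≤ 2 * C * 9 ^ m * (N / Real.log N ^ m) := by
    have h1 : (Real.log q ^ (2 * m))⁻¹ ≤ 9 ^ m / Real.log N ^ (2 * m) := by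
      rw [inv_le_comm₀ (by positivity) (by positivity), inv_div, div_le_iff₀ (by positivity)]
      calc Real.log N ^ (2 * m) ≤ (3 * Real.log q) ^ (2 * m) := by gcongr
        _ = _ := by rw [mul_pow, pow_mul 3, mul_comm]; norm_num
    calc _ ≤ D * (9 ^ m / Real.log N ^ (2 * m)) := by gcongr
      _ = _ := by rw [hDdef, mul_comm 2 m, pow_mul]; field_simp
  rw [hpsi, ← Finset.sum_Ioc_consecutive _ (Nat.zero_le q) hqN, ← hS2]
  calc _ ≤ (Real.log 4 + 4 + 1) * q + D * (Real.log q ^ (2 * m))⁻¹ :=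
        (abs_add_le _ _).trans (add_le_add hS1 hsum)
    _ ≤ (Real.log 4 + 4 + 1) * (N / Real.log N ^ m) + 2 * C * 9 ^ m * (N / Real.log N ^ m) := by
        gcongr
    _ = _ := by ring

lemma eventually_abs_theta_sub_le {m : ℕ} (hm : m ≠ 0) : ∃ C : ℝ, 0 ≤ C ∧
    ∀ᶠ N : ℕ in atTop, |Chebyshev.theta N - N| ≤ C * (N / Real.log N ^ m) := by
  obtain ⟨C, hC0, hC⟩ := eventually_abs_psi_sub_le hm
  refine ⟨C + 2, by positivity, ?_⟩
  filter_upwards [hC, eventually_ge_atTop 2, eventually_log_pow_le (2 * (m + 1)) one_pos] with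
    N h1 hN hlog
  have hN1 : (2 : ℝ) ≤ N := by exact_mod_cast hN
  have hlN : 0 < Real.log N := Real.log_pos (by linarith)
  have h2 := Chebyshev.abs_psi_sub_theta_le_sqrt_mul_log (x := N) (by linarith)
  have h3 : Real.sqrt N * Real.log N ≤ N / Real.log N ^ m := by
    rw [le_div_iff₀ (by positivity), mul_assoc, ← pow_succ']
    refine le_of_sq_le_sq ?_ (by positivity)
    rw [mul_pow, Real.sq_sqrt (by positivity), sq (N : ℝ), ← pow_mul, mul_comm (m + 1)]
    gcongr
    simpa using hlog
  calc _ = |(Chebyshev.psi N - N) - (Chebyshev.psi N - Chebyshev.theta N)| := by congr 1; ring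
    _ ≤ C * (N / Real.log N ^ m) + 2 * (N / Real.log N ^ m) :=
        (abs_sub _ _).trans (add_le_add h1 (by linarith))
    _ = _ := by ring

/-! ### Comparison of iterated logarithms -/

lemma abs_log_sub_log_le {x y δ : ℝ} (hx : 0 < x) (hδ : δ ≤ 1 / 2) (h : |y - x| ≤ δ * x) :
    |Real.log y - Real.log x| ≤ 2 * δ := by
  obtain ⟨h1, h2⟩ := abs_le.mp h
  have hδ0 : 0 ≤ δ := nonneg_of_mul_nonneg_left ((abs_nonneg _).trans h) hx
  have hy : x / 2 ≤ y := by nlinarith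
  have hy0 : 0 < y := by linarith
  rw [← Real.log_div hy0.ne' hx.ne', abs_le]
  constructor
  · have := Real.one_sub_inv_le_log_of_pos (div_pos hy0 hx)
    refine le_trans ?_ this
    rw [inv_div]
    have : x / y ≤ 1 + 2 * δ := by
      rw [div_le_iff₀ hy0]
      nlinarith
    linarith
  · refine (Real.log_le_sub_one_of_pos (div_pos hy0 hx)).trans ?_
    have : y / x ≤ 1 + δ := by
      rw [div_le_iff₀ hx]
      linarith
    linarith

lemma log_primorialOfFirstPrimes {k : ℕ} (hk : 0 < k) :
    Real.log (primorialOfFirstPrimes k) = Chebyshev.theta (Nat.nth Nat.Prime (k - 1)) := by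
  have hset : (Finset.Ioc 0 (Nat.nth Nat.Prime (k - 1))).filter Nat.Prime =
      (Finset.range k).image (Nat.nth Nat.Prime) := by
    ext p
    simp only [Finset.mem_filter, Finset.mem_Ioc, Finset.mem_image, Finset.mem_range]
    constructor
    · rintro ⟨⟨_, hp⟩, hpp⟩
      refine ⟨Nat.count Nat.Prime p, ?_, Nat.nth_count hpp⟩
      by_contra! hcon
      have : Nat.nth Nat.Prime (k - 1) < Nat.nth Nat.Prime (Nat.count Nat.Prime p) :=
        Nat.nth_strictMono Nat.infinite_setOfPred_prime (show k - 1 < Nat.count Nat.Prime p by omega)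
      rw [Nat.nth_count hpp] at this
      omega
    · rintro ⟨i, hi, rfl⟩
      have := Nat.prime_nth_prime i
      exact ⟨⟨this.pos, (Nat.nth_monotone Nat.infinite_setOfPred_prime) (by omega)⟩, this⟩
  rw [primorialOfFirstPrimes, Chebyshev.theta, Nat.floor_natCast, hset,
    Finset.sum_image (fun i _ j _ h => Nat.nth_injective Nat.infinite_setOfPred_prime h),
    Nat.cast_prod, Real.log_prod fun i _ => by exact_mod_cast (Nat.prime_nth_prime i).ne_zero]

end

/-- **Proposition 6 (paper).** For every `B > 0` there are `C > 0` and `K` such that for all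
`k ≥ K`, `|log log p_k − log log log N_k| ≤ C / (log log N_k)^(B+1)`, where `p_k` is the
`k`-th prime and `N_k` the `k`-th primorialOfFirstPrimes. -/
theorem loglog_prime_sub_logloglog_primorial_bound :
    ∀ B : ℝ, 0 < B → ∃ C : ℝ, 0 < C ∧ ∃ K : ℕ, ∀ k : ℕ, K ≤ k →
      |Real.log (Real.log (Nat.nth Nat.Prime (k - 1) : ℝ)) -
          Real.log (Real.log (Real.log (primorialOfFirstPrimes k : ℝ)))| ≤
        C / Real.log (Real.log (primorialOfFirstPrimes k : ℝ)) ^ (B + 1) := by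
  intro B hB
  have hm : ⌈B⌉₊ ≠ 0 := (Nat.ceil_pos.mpr hB).ne'
  obtain ⟨C, hC0, hC⟩ := eventually_abs_theta_sub_le hm
  set m := ⌈B⌉₊
  have hev : ∀ᶠ p : ℕ in Filter.atTop,
      |Real.log (Real.log p) - Real.log (Real.log (Chebyshev.theta p))| ≤
        (4 * C + 1) * 2 ^ (B + 1) / Real.log (Chebyshev.theta p) ^ (B + 1) := by
    filter_upwards [hC, tendsto_log_natCast.eventually_ge_atTop 1,
      ((Filter.tendsto_pow_atTop hm).comp tendsto_log_natCast).eventually_ge_atTop (4 * C + 1),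
      Filter.eventually_ge_atTop 1] with p h1 hl1 hlC hp
    simp only [Function.comp_apply] at hlC
    have hp0 : (0 : ℝ) < p := by exact_mod_cast hp
    have hl0 : 0 < Real.log p := by linarith
    set l := Real.log p with hl
    have hlm : 0 < l ^ m := by positivity
    set δ := C / l ^ m with hδ
    have hδ0 : 0 ≤ δ := by positivity
    have hδ4 : δ ≤ 1 / 4 := by rw [hδ, div_le_iff₀ hlm]; linarith
    have s1 : |Real.log (Chebyshev.theta p) - l| ≤ 2 * δ :=
      abs_log_sub_log_le hp0 (by linarith) (h1.trans_eq (by rw [hδ]; ring))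
    have hδl : δ / l ≤ δ := div_le_self hδ0 hl1
    have s2 : |Real.log (Real.log (Chebyshev.theta p)) - Real.log l| ≤ 2 * (2 * (δ / l)) :=
      abs_log_sub_log_le hl0 (by linarith) (s1.trans_eq (by field_simp))
    obtain ⟨s3, s4⟩ := abs_le.mp s1
    set t := Real.log (Chebyshev.theta p)
    have ht0 : 0 < t := by linarith
    have s5 : δ / l ≤ C / l ^ (B + 1) := by
      rw [hδ, div_div, ← pow_succ]
      gcongr
      rw [← Real.rpow_natCast]
      apply Real.rpow_le_rpow_of_exponent_le hl1
      push_cast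
      linarith [Nat.le_ceil B]
    have s6 : t ^ (B + 1) ≤ 2 ^ (B + 1) * l ^ (B + 1) := by
      rw [← Real.mul_rpow (by norm_num) hl0.le]
      gcongr
      linarith
    rw [abs_sub_comm]
    calc _ ≤ 2 * (2 * (δ / l)) := s2
      _ ≤ 4 * C / l ^ (B + 1) := by
        rw [show 2 * (2 * (δ / l)) = 4 * (δ / l) by ring, mul_div_assoc]
        gcongr
      _ ≤ (4 * C + 1) / l ^ (B + 1) := by gcongr; linarith
      _ ≤ _ := by
        rw [div_le_div_iff₀ (by positivity) (by positivity), mul_assoc]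
        gcongr
  have htend : Filter.Tendsto (fun k : ℕ => Nat.nth Nat.Prime (k - 1)) Filter.atTop Filter.atTop :=
    (Nat.nth_strictMono Nat.infinite_setOfPred_prime).tendsto_atTop.comp (Filter.tendsto_sub_atTop_nat 1)
  obtain ⟨K, hK⟩ := Filter.eventually_atTop.mp (htend.eventually hev)
  refine ⟨(4 * C + 1) * 2 ^ (B + 1), by positivity, max K 1, fun k hk => ?_⟩
  rw [log_primorialOfFirstPrimes (lt_of_lt_of_le one_pos ((le_max_right K 1).trans hk))]
  exact hK k ((le_max_left K 1).trans hk)
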